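/- Let k ≥ 2. Then, as an inequality of real numbers, the covering radius of the Z_4-Simplex code satisfies R(S_{k+1}(4)) ≤ (5·4^{k+1} + 3k - 29)/18. -/

import Mathlib

/-- The Hamming distance between two words: the number of coordinates where they differ. -/
noncomputable def hdist {q : ℕ} {I : Type*} (x y : I → ZMod q) : ℕ :=
  Set.ncard {i | x i ≠ y i}

/-- The covering radius of a code `C`: the maximum over all words `u` of the minimum Hamming
distance from `u` to a codeword of `C`. -/
noncomputable def covRad {q : ℕ} {I : Type*} (C : Set (I → ZMod q)) : ℕ :=
  sSup {r | ∃ u : I → ZMod q, r = sInf {e | ∃ c ∈ C, e = hdist u c}}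

/-- `Vset q k` consists of the nonzero words `v : Fin k → ZMod q` whose last nonzero
coordinate equals `1` (one representative from each free rank-one submodule). -/
def Vset (q k : ℕ) : Set (Fin k → ZMod q) :=
  {v | v ≠ 0 ∧ ∃ m : Fin k, v m ≠ 0 ∧ (∀ i, m < i → v i = 0) ∧ v m = 1}

/-- The `ZMod q`-Simplex code of dimension `k`: the words obtained by evaluating a linear
form `u` at all columns `v ∈ Vset q k`. -/
def SimplexCode (q k : ℕ) : Set (↥(Vset q k) → ZMod q) :=
  {c | ∃ u : Fin k → ZMod q, c = fun v : ↥(Vset q k) => ∑ i, u i * v.1 i}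

/-!
Every column of the simplex code has a coordinate equal to `1`, so in each position all `q` symbols
occur equally often among the codewords. Hence the distance from a fixed word to a codeword,
averaged over the code, is `(q - 1) / q` times the length. In dimension `k + 1` the length is
`1 + q + ⋯ + q ^ k`, so some codeword is at distance at most `(q ^ (k + 1) - 1) / q < q ^ k`. For
`q = 4` and `k ≥ 2` the integer bound `4 ^ k - 1` is already below the required one.
-/

section Averaging

variable {q : ℕ} {I : Type*}

lemma hdist_eq_hammingDist [Fintype I] (x y : I → ZMod q) : hdist x y = hammingDist x y := by
  rw [hdist, hammingDist, ← Set.ncard_coe_finset, Finset.coe_filter_univ]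

lemma covRad_le_of_forall_exists_hdist_le {C : Set (I → ZMod q)} {r : ℕ}
    (h : ∀ u, ∃ c ∈ C, hdist u c ≤ r) : covRad C ≤ r := by
  refine csSup_le' ?_
  rintro _ ⟨u, rfl⟩
  obtain ⟨c, hc, hr⟩ := h u
  refine le_trans (Nat.sInf_le ?_) hr
  exact ⟨c, hc, rfl⟩

/-- The words of `C` are the rows of an orthogonal array of strength one: in each position, all
symbols of `ZMod q` occur equally often. The frequency `|C| / q` is stated without division; the
notion is meaningful for finite `C` only. -/
def HasStrengthOne (C : Set (I → ZMod q)) : Prop :=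
  ∀ (i : I) (t : ZMod q), q * {c ∈ C | c i = t}.ncard = C.ncard

variable [NeZero q] [Finite I]

lemma hasStrengthOne_of_exists_eq_one (C : Submodule (ZMod q) (I → ZMod q))
    (hC : ∀ i, ∃ c ∈ C, c i = 1) : HasStrengthOne (C : Set (I → ZMod q)) := by
  classical
  intro i t
  have : Fintype C := Fintype.ofFinite C
  let evalAt : C →ₗ[ZMod q] ZMod q := LinearMap.proj i ∘ₗ C.subtype
  have mem_range (s : ZMod q) : s ∈ Set.range evalAt := by
    obtain ⟨c, hc, hci⟩ := hC i
    exact ⟨s • ⟨c, hc⟩, by simp [evalAt, hci]⟩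
  have card_fiber (s : ZMod q) :
      Finset.card {c : C | evalAt c = s} = Finset.card {c : C | evalAt c = t} :=
    AddMonoidHom.card_fiber_eq_of_mem_range evalAt (mem_range s) (mem_range t)
  have ncard_fiber :
      {c ∈ (C : Set (I → ZMod q)) | c i = t}.ncard = Finset.card {c : C | evalAt c = t} := by
    rw [← Set.ncard_coe_finset, ← Set.ncard_image_of_injective _ Subtype.val_injective]
    congr 1
    ext c
    constructor
    · rintro ⟨hc, hct⟩
      exact ⟨⟨c, hc⟩, Finset.mem_filter_univ _ |>.2 hct, rfl⟩
    · rintro ⟨c, hc, rfl⟩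
      exact ⟨c.2, Finset.mem_filter_univ c |>.1 hc⟩
  calc q * {c ∈ (C : Set (I → ZMod q)) | c i = t}.ncard
      = ∑ s : ZMod q, Finset.card {c : C | evalAt c = s} := by
        simp only [card_fiber, ncard_fiber, Finset.sum_const, Finset.card_univ, ZMod.card,
          smul_eq_mul]
    _ = Fintype.card C := (Finset.card_eq_sum_card_fiberwise fun _ _ => Finset.mem_univ _).symm
    _ = (C : Set (I → ZMod q)).ncard := Fintype.card_eq_nat_card

namespace HasStrengthOne

variable {C : Set (I → ZMod q)}

lemma mul_ncard_ne (hC : HasStrengthOne C) (i : I) (t : ZMod q) :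
    q * {c ∈ C | t ≠ c i}.ncard = (q - 1) * C.ncard := by
  have split : {c ∈ C | c i = t}.ncard + {c ∈ C | t ≠ c i}.ncard = C.ncard := by
    rw [← Set.ncard_inter_add_ncard_sdiff_eq_ncard C {c | c i = t}]
    congr 2
    ext c
    simp [eq_comm]
  rw [Nat.sub_one_mul, ← split, mul_add, hC i t, split, Nat.add_sub_cancel_left]

lemma sum_mul_hdist (hC : HasStrengthOne C) (u : I → ZMod q) :
    ∑ c ∈ C.toFinite.toFinset, q * hdist u c = C.ncard * ((q - 1) * Nat.card I) := by
  have : Fintype I := Fintype.ofFinite I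
  calc ∑ c ∈ C.toFinite.toFinset, q * hdist u c
      = q * ∑ i, (C.toFinite.toFinset.filter fun c => u i ≠ c i).card := by
        simp only [← Finset.mul_sum, hdist_eq_hammingDist]
        congr 1
        exact Finset.sum_card_bipartiteAbove_eq_sum_card_bipartiteBelow
          fun (c : I → ZMod q) i => u i ≠ c i
    _ = ∑ i, q * {c ∈ C | u i ≠ c i}.ncard := by
        simp only [Finset.mul_sum, ← Set.ncard_coe_finset, Finset.coe_filter,
          Set.Finite.mem_toFinset]
    _ = C.ncard * ((q - 1) * Nat.card I) := by
        simp only [hC.mul_ncard_ne, Finset.sum_const, Finset.card_univ, Nat.card_eq_fintype_card,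
          smul_eq_mul]
        ring

lemma exists_mul_hdist_le (hC : HasStrengthOne C) (hne : C.Nonempty) (u : I → ZMod q) :
    ∃ c ∈ C, q * hdist u c ≤ (q - 1) * Nat.card I := by
  have total : ∑ c ∈ C.toFinite.toFinset, q * hdist u c
      ≤ ∑ _c ∈ C.toFinite.toFinset, (q - 1) * Nat.card I := by
    rw [hC.sum_mul_hdist, Finset.sum_const, smul_eq_mul, Set.ncard_eq_toFinset_card]
  obtain ⟨c, hc, hle⟩ := Finset.exists_le_of_sum_le (by simpa using hne) total
  exact ⟨c, by simpa using hc, hle⟩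

theorem covRad_le (hC : HasStrengthOne C) (hne : C.Nonempty) :
    covRad C ≤ (q - 1) * Nat.card I / q := by
  refine covRad_le_of_forall_exists_hdist_le fun u => ?_
  obtain ⟨c, hc, hle⟩ := hC.exists_mul_hdist_le hne u
  exact ⟨c, hc, (Nat.le_div_iff_mul_le (NeZero.pos q)).2 (mul_comm q _ ▸ hle)⟩

end HasStrengthOne

end Averaging

section Simplex

variable (q k : ℕ)

/-- The generator matrix of the simplex code: its columns are the elements of `Vset q k`. It
exhibits the code as the range of a linear map. -/
def simplexGenerator : Matrix (Fin k) (Vset q k) (ZMod q) :=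
  Matrix.of fun i v => v.1 i

lemma simplexCode_eq_range :
    SimplexCode q k = LinearMap.range (simplexGenerator q k).vecMulLinear := by
  ext c
  exact ⟨fun ⟨u, hu⟩ => ⟨u, hu.symm⟩, fun ⟨u, hu⟩ => ⟨u, hu.symm⟩⟩

variable [Fact (1 < q)]

variable {q k} in
lemma mem_vset_iff {v : Fin k → ZMod q} :
    v ∈ Vset q k ↔ ∃ m, v m = 1 ∧ ∀ i, m < i → v i = 0 := by
  constructor
  · rintro ⟨-, m, -, hzero, hone⟩
    exact ⟨m, hone, hzero⟩
  · rintro ⟨m, hone, hzero⟩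
    have hm : v m ≠ 0 := hone ▸ one_ne_zero
    exact ⟨Function.ne_iff.2 ⟨m, hm⟩, m, hm, hzero, hone⟩

lemma vset_succ :
    Vset q (k + 1) =
      (fun v => Fin.snoc v 0) '' Vset q k ∪ Set.range fun v : Fin k → ZMod q => Fin.snoc v 1 := by
  ext w
  induction w using Fin.snocCases with | _ v x =>
  simp only [mem_vset_iff, Fin.exists_fin_succ', Fin.forall_fin_succ', Fin.snoc_castSucc,
    Fin.snoc_last, Set.mem_union, Set.mem_image, Set.mem_range, Fin.snoc_inj,
    Fin.castSucc_lt_castSucc_iff, Fin.castSucc_lt_last, (Fin.le_last _).not_gt]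
  simp [← and_assoc, eq_comm]

lemma ncard_vset_succ : (Vset q (k + 1)).ncard = (Vset q k).ncard + q ^ k := by
  have hdisj : Disjoint ((fun v => Fin.snoc v 0) '' Vset q k)
      (Set.range fun v : Fin k → ZMod q => (Fin.snoc v 1 : Fin (k + 1) → ZMod q)) := by
    rw [Set.disjoint_left]
    rintro _ ⟨v, -, rfl⟩ ⟨w, hw⟩
    exact one_ne_zero (Fin.snoc_inj.1 hw).2
  have snoc_injective (x : ZMod q) :
      Function.Injective fun v : Fin k → ZMod q => (Fin.snoc v x : Fin (k + 1) → ZMod q) :=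
    Fin.snoc_left_injective (α := fun _ => ZMod q) x
  rw [vset_succ, Set.ncard_union_eq hdisj, Set.ncard_image_of_injective _ (snoc_injective 0),
    Set.ncard_range_of_injective (snoc_injective 1), Nat.card_fun, Nat.card_zmod, Nat.card_fin]

lemma ncard_vset : (Vset q k).ncard = ∑ i ∈ Finset.range k, q ^ i := by
  induction k with
  | zero =>
    rw [Finset.sum_range_zero, Set.ncard_eq_zero, Set.eq_empty_iff_forall_notMem]
    rintro v ⟨-, m, -⟩
    exact m.elim0
  | succ k ih => rw [ncard_vset_succ, ih, Finset.sum_range_succ]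

lemma hasStrengthOne_simplexCode : HasStrengthOne (SimplexCode q k) := by
  rw [simplexCode_eq_range]
  refine hasStrengthOne_of_exists_eq_one _ fun v => ?_
  obtain ⟨m, hm, -⟩ := mem_vset_iff.1 v.2
  refine ⟨_, ⟨Pi.single m 1, rfl⟩, ?_⟩
  simp [simplexGenerator, hm]

theorem covRad_simplexCode_le : covRad (SimplexCode q k) ≤ (q ^ k - 1) / q := by
  have length : (q - 1) * Nat.card (Vset q k) = q ^ k - 1 := by
    rw [Nat.card_coe_set_eq, ncard_vset, mul_comm, geom_sum_mul_of_one_le NeZero.one_le]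
  rw [← length]
  exact (hasStrengthOne_simplexCode q k).covRad_le ⟨0, 0, by ext; simp⟩

theorem covRad_simplexCode_succ_lt : covRad (SimplexCode q (k + 1)) < q ^ k := by
  refine (covRad_simplexCode_le q (k + 1)).trans_lt (Nat.div_lt_of_lt_mul ?_)
  rw [← pow_succ']
  exact Nat.sub_one_lt (NeZero.ne _)

end Simplex

/-- For `k ≥ 2`, the covering radius of the `ZMod 4`-Simplex code satisfies
`R(S_{k+1}(4)) ≤ (5·4^{k+1} + 3k - 29)/18`. -/
theorem covRad_simplex_four_le (k : ℕ) (hk : 2 ≤ k) :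
    (covRad (SimplexCode 4 (k + 1)) : ℝ) ≤
      (5 * 4 ^ (k + 1) + 3 * (k : ℝ) - 29) / 18 := by
  have : Fact (1 < 4) := ⟨by norm_num⟩
  have radius_add_one_le : (covRad (SimplexCode 4 (k + 1)) : ℝ) + 1 ≤ 4 ^ k := by
    exact_mod_cast covRad_simplexCode_succ_lt 4 k
  have sixteen_le : (4 : ℝ) ^ 2 ≤ 4 ^ k := pow_le_pow_right₀ (by norm_num) hk
  rw [le_div_iff₀ (by norm_num), pow_succ]
  linarith
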